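/- Equip P = k[x₁,x₂,x₃] with the Poisson bracket {x₁,x₂} = x₁x₂, {x₂,x₃} = 3x₁² + 2x₁x₂ + x₂x₃, {x₃,x₁} = x₁² + x₁x₃. If G is a nontrivial finite subgroup of the graded Poisson automorphism group of P generated by Poisson reflections, then the invariant subalgebra P^G is not isomorphic to P as a Poisson algebra. -/

import Mathlib

open MvPolynomial

/-- The bracket on `k[x₁,x₂,x₃]` determined by the values `p12 = {x₁,x₂}`, `p23 = {x₂,x₃}`,
`p31 = {x₃,x₁}` via `{f,g} = Σ_{i<j} (∂f/∂xᵢ·∂g/∂xⱼ − ∂f/∂xⱼ·∂g/∂xᵢ)·{xᵢ,xⱼ}`. -/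
noncomputable def jacBracket {k : Type*} [Field k] (p12 p23 p31 : MvPolynomial (Fin 3) k)
    (f g : MvPolynomial (Fin 3) k) : MvPolynomial (Fin 3) k :=
  (pderiv 0 f * pderiv 1 g - pderiv 1 f * pderiv 0 g) * p12 +
    (pderiv 1 f * pderiv 2 g - pderiv 2 f * pderiv 1 g) * p23 +
    (pderiv 2 f * pderiv 0 g - pderiv 0 f * pderiv 2 g) * p31

/-- A graded Poisson automorphism: an algebra automorphism preserving the degree-one
component and the Poisson bracket. -/
def IsGradedPoissonAut {k : Type*} [Field k]
    (br : MvPolynomial (Fin 3) k → MvPolynomial (Fin 3) k → MvPolynomial (Fin 3) k)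
    (φ : MvPolynomial (Fin 3) k ≃ₐ[k] MvPolynomial (Fin 3) k) : Prop :=
  (∀ i, (φ (X i)).IsHomogeneous 1) ∧ ∀ f g, φ (br f g) = br (φ f) (φ g)

/-- A Poisson reflection: a graded Poisson automorphism of finite order whose restriction to
the degree-one part (as a matrix) has eigenvalues `1, 1, ξ` for some root of unity `ξ ≠ 1`. -/
def IsPoissonReflection {k : Type*} [Field k]
    (br : MvPolynomial (Fin 3) k → MvPolynomial (Fin 3) k → MvPolynomial (Fin 3) k)
    (φ : MvPolynomial (Fin 3) k ≃ₐ[k] MvPolynomial (Fin 3) k) : Prop :=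
  IsGradedPoissonAut br φ ∧ (∃ n, 0 < n ∧ φ ^ n = 1) ∧
    ∃ M : Matrix (Fin 3) (Fin 3) k, (∀ i, φ (X i) = ∑ j, C (M i j) * X j) ∧
      ∃ ξ : k, ξ ≠ 1 ∧ (∃ m, 0 < m ∧ ξ ^ m = 1) ∧
        M.charpoly = (Polynomial.X - 1) ^ 2 * (Polynomial.X - Polynomial.C ξ)

/-- `P^G ≅ P` as Poisson algebras: there is an injective algebra map `e : P → P` preserving
the bracket whose range is the invariant subalgebra `P^G`. -/
def InvariantsPoissonIso {k : Type*} [Field k]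
    (br : MvPolynomial (Fin 3) k → MvPolynomial (Fin 3) k → MvPolynomial (Fin 3) k)
    (G : Subgroup (MvPolynomial (Fin 3) k ≃ₐ[k] MvPolynomial (Fin 3) k)) : Prop :=
  ∃ e : MvPolynomial (Fin 3) k →ₐ[k] MvPolynomial (Fin 3) k,
    Function.Injective e ∧
    Set.range e = {f : MvPolynomial (Fin 3) k | ∀ φ ∈ G, φ f = f} ∧
    ∀ f g, e (br f g) = br (e f) (e g)

/-! The substitution `w = x + z` turns the bracket into `{x, y} = xy`, `{y, w} = yw + 3x²`,
`{w, x} = wx`. It vanishes exactly on the lines `x = yw = 0`, so a graded Poisson automorphism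
scales `x`; as `{x, -}` acts on linear forms by `y ↦ xy`, `w ↦ -xw`, it scales `y` and `w` too,
say by `a`, `b`, `c`, and `{y, w}` forces `bc = a²`. Hence the only reflection is
`(x, y, w) ↦ (-x, y, w)`, and the invariants of `G` are `k[x², y, w]`. There
`3x² = {y, w} - yw`, so `y` and `w` generate the invariants together with all brackets. In `P`,
however, brackets lie in the square of the maximal ideal at the origin, whose cotangent space has
dimension three, so no two elements together with all brackets generate `P`. -/

section CommutativeAlgebra

theorem derivation_apply_mem_of_mem_sq {R A : Type*} [CommSemiring R] [CommSemiring A]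
    [Algebra R A] (D : Derivation R A A) {I : Ideal A} {f : A} (hf : f ∈ I ^ 2) : D f ∈ I := by
  rw [pow_two] at hf
  refine Submodule.mul_induction_on hf (fun p hp q hq => ?_) fun p q hp hq => ?_
  · rw [D.leibniz]
    exact I.add_mem (I.mul_mem_right _ hp) (I.mul_mem_right _ hq)
  · rw [map_add]
    exact I.add_mem hp hq

theorem derivation_apply_mem_of_mem_adjoin {R A M : Type*} [CommRing R] [CommRing A] [Algebra R A]
    [AddCommGroup M] [Module R M] [Module A M] [IsScalarTower R A M] (D : Derivation R A M)
    (N : Submodule A M) {S : Set A} (hS : ∀ s ∈ S, D s ∈ N) {f : A}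
    (hf : f ∈ Algebra.adjoin R S) : D f ∈ N := by
  have heq : Set.EqOn (N.mkQ.compDer D) (0 : Derivation R A (M ⧸ N)) (Algebra.adjoin R S) :=
    Derivation.eqOn_adjoin fun s hs => (Submodule.Quotient.mk_eq_zero N).2 (hS s hs)
  exact (Submodule.Quotient.mk_eq_zero N).1 (heq hf)

theorem exists_sum_mul_constantCoeff_pderiv_eq_zero {k σ : Type*} [Field k] [Fintype σ]
    (S : Finset (MvPolynomial σ k)) (hS : S.card < Fintype.card σ) :
    ∃ v : σ → k, v ≠ 0 ∧ ∀ s ∈ S, ∑ i, v i * constantCoeff (pderiv i s) = 0 := by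
  let J : Matrix S σ k := Matrix.of fun s i => constantCoeff (pderiv i s.1)
  have hker : J.mulVecLin.ker ≠ ⊥ := LinearMap.ker_ne_bot_of_finrank_lt (by simpa using hS)
  obtain ⟨v, hv, hv0⟩ := Submodule.exists_mem_ne_zero_of_ne_bot hker
  refine ⟨v, hv0, fun s hs => ?_⟩
  simpa [J, Matrix.mulVecLin_apply, Matrix.mulVec, dotProduct, mul_comm] using congrFun hv ⟨s, hs⟩

/- A nonzero tangent vector at the origin killing `S` also kills the square of the maximal ideal,
hence everything that `S` and this square generate. -/
theorem adjoin_union_ker_constantCoeff_sq_ne_top {k σ : Type*} [Field k] [Fintype σ]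
    (S : Finset (MvPolynomial σ k)) (hS : S.card < Fintype.card σ) :
    Algebra.adjoin k (S ∪ ↑(RingHom.ker (constantCoeff (R := k) (σ := σ)) ^ 2) :
      Set (MvPolynomial σ k)) ≠ ⊤ := by
  classical
  intro htop
  obtain ⟨v, hv0, hv⟩ := exists_sum_mul_constantCoeff_pderiv_eq_zero S hS
  let D : Derivation k (MvPolynomial σ k) (MvPolynomial σ k) := ∑ i, v i • pderiv i
  have hD (f : MvPolynomial σ k) : constantCoeff (D f) = ∑ i, v i * constantCoeff (pderiv i f) := by
    have hcoe : D f = ∑ i, v i • pderiv i f :=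
      (congrFun (map_sum (Derivation.coeFnAddMonoidHom (R := k) (A := MvPolynomial σ k)
        (M := MvPolynomial σ k)) _ _) f).trans (Finset.sum_apply _ _ _)
    simp [hcoe, smul_eq_C_mul]
  have hker (f : MvPolynomial σ k) : D f ∈ RingHom.ker (constantCoeff (R := k) (σ := σ)) := by
    refine derivation_apply_mem_of_mem_adjoin D _ ?_ (htop ▸ Algebra.mem_top : f ∈ _)
    rintro s (hs | hs)
    exacts [(hD s).trans (hv s hs), derivation_apply_mem_of_mem_sq D hs]
  refine hv0 (funext fun i => ?_)
  simpa [hD, pderiv_X, Pi.single_apply, apply_ite, RingHom.mem_ker] using hker (X i)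

theorem exists_eq_add_mul_of_mem_adjoin_insert {R A : Type*} [CommRing R] [CommRing A]
    [Algebra R A] {x : A} {T : Set A} {f : A} (hf : f ∈ Algebra.adjoin R (insert x T)) :
    ∃ g ∈ Algebra.adjoin R (insert (x ^ 2) T), ∃ h ∈ Algebra.adjoin R (insert (x ^ 2) T),
      f = g + x * h := by
  set B := Algebra.adjoin R (insert (x ^ 2) T)
  have hx : x ^ 2 ∈ B := Algebra.subset_adjoin (Set.mem_insert _ _)
  induction hf using Algebra.adjoin_induction with
  | mem f hf =>
    rcases hf with rfl | hf
    · exact ⟨0, B.zero_mem, 1, B.one_mem, by ring⟩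
    · exact ⟨f, Algebra.subset_adjoin (Set.mem_insert_of_mem _ hf), 0, B.zero_mem, by ring⟩
  | algebraMap r => exact ⟨_, B.algebraMap_mem r, 0, B.zero_mem, by ring⟩
  | add f f' _ _ hf hf' =>
    obtain ⟨g, hg, h, hh, rfl⟩ := hf
    obtain ⟨g', hg', h', hh', rfl⟩ := hf'
    exact ⟨_, B.add_mem hg hg', _, B.add_mem hh hh', by ring⟩
  | mul f f' _ _ hf hf' =>
    obtain ⟨g, hg, h, hh, rfl⟩ := hf
    obtain ⟨g', hg', h', hh', rfl⟩ := hf'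
    exact ⟨g * g' + x ^ 2 * (h * h'),
      B.add_mem (B.mul_mem hg hg') (B.mul_mem hx (B.mul_mem hh hh')),
      g * h' + h * g', B.add_mem (B.mul_mem hg hh') (B.mul_mem hh hg'), by ring⟩

theorem mem_adjoin_insert_sq_of_apply_eq_self {R A : Type*} [CommRing R] [CommRing A] [Algebra R A]
    (h2 : IsUnit (2 : R)) (φ : A →ₐ[R] A) {x : A} {T : Set A} (hx : φ x = -x)
    (hT : ∀ t ∈ T, φ t = t) {f : A} (hf : f ∈ Algebra.adjoin R (insert x T)) (hφ : φ f = f) :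
    f ∈ Algebra.adjoin R (insert (x ^ 2) T) := by
  obtain ⟨g, hg, h, hh, rfl⟩ := exists_eq_add_mul_of_mem_adjoin_insert hf
  have hfix : Set.EqOn φ (AlgHom.id R A) (Algebra.adjoin R (insert (x ^ 2) T)) := by
    rw [AlgHom.eqOn_adjoin_iff]
    rintro t (rfl | ht)
    · simp [hx]
    · exact hT t ht
  have hodd : (2 : A) * (x * h) = 0 := by
    rw [map_add, map_mul, hx, hfix hg, hfix hh] at hφ
    simp only [AlgHom.id_apply] at hφ
    linear_combination -hφ
  have h2A : IsUnit (2 : A) := by simpa only [map_ofNat] using h2.map (algebraMap R A)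
  rw [h2A.mul_right_eq_zero] at hodd
  rwa [hodd, add_zero]

theorem adjoin_eq_top_of_range_eq_adjoin_image {R A B : Type*} [CommSemiring R] [Semiring A]
    [Semiring B] [Algebra R A] [Algebra R B] {e : A →ₐ[R] B} (he : Function.Injective e)
    {S : Set A} (h : e.range = Algebra.adjoin R (e '' S)) : Algebra.adjoin R S = ⊤ := by
  apply Subalgebra.map_injective he
  rw [AlgHom.map_adjoin, ← h, Algebra.map_top]

theorem forall_mem_closure_apply_eq_self_iff {R A : Type*} [CommSemiring R] [Semiring A]
    [Algebra R A] {S : Set (A ≃ₐ[R] A)} {f : A} :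
    (∀ φ ∈ Subgroup.closure S, φ f = f) ↔ ∀ φ ∈ S, φ f = f :=
  Subgroup.closure_le (MulAction.stabilizer (A ≃ₐ[R] A) f)

theorem eigenvalues_eq_of_charpoly_eq {R : Type*} [CommRing R] [IsDomain R] {a b c ξ : R}
    (ha : a ≠ 0) (hbc : b * c = a ^ 2) (hξ : ξ ≠ 1)
    (h : ∀ t, (t - a) * (t - b) * (t - c) = (t - 1) ^ 2 * (t - ξ)) :
    a = -1 ∧ b = 1 ∧ c = 1 := by
  have hdet : a * (b * c) = ξ := by linear_combination -h 0
  have ha1 : a ≠ 1 := by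
    rintro rfl
    exact hξ (by rw [← hdet, hbc]; ring)
  have haξ : a = ξ := by
    have : (a - 1) ^ 2 * (a - ξ) = 0 := by linear_combination -h a
    simpa [sub_eq_zero, ha1] using this
  have hbc1 : b * c = 1 := by simpa [← haξ, ha] using hdet
  have ha' : a = -1 := by
    have : (a - 1) * (a + 1) = 0 := by linear_combination hbc1 - hbc
    exact eq_neg_of_add_eq_zero_left ((mul_eq_zero.1 this).resolve_left (sub_ne_zero.2 ha1))
  have h1 : (1 - b) * (1 - c) = 0 := by
    have : (1 - a) * ((1 - b) * (1 - c)) = 0 := by linear_combination h 1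
    exact (mul_eq_zero.1 this).resolve_left (sub_ne_zero.2 ha1.symm)
  rcases mul_eq_zero.1 h1 with hb | hc
  · obtain rfl := sub_eq_zero.1 hb
    exact ⟨ha', rfl, by simpa using hbc1⟩
  · obtain rfl := sub_eq_zero.1 hc
    exact ⟨ha', by simpa using hbc1, rfl⟩

end CommutativeAlgebra

section LinearForms

variable {R : Type*} [CommRing R]

theorem adjoin_X_zero_X_one_w_eq_top :
    Algebra.adjoin R {X 0, X 1, X 0 + X 2} = (⊤ : Subalgebra R (MvPolynomial (Fin 3) R)) := by
  set B : Subalgebra R (MvPolynomial (Fin 3) R) := Algebra.adjoin R {X 0, X 1, X 0 + X 2}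
  have hx : X 0 ∈ B := Algebra.subset_adjoin (by simp)
  have hy : X 1 ∈ B := Algebra.subset_adjoin (by simp)
  have hw : X 0 + X 2 ∈ B := Algebra.subset_adjoin (by simp)
  have hz : X 2 ∈ B := by simpa using B.sub_mem hw hx
  rw [← top_le_iff, ← MvPolynomial.adjoin_range_X, Algebra.adjoin_le_iff, Set.range_subset_iff,
    Fin.forall_fin_succ, Fin.forall_fin_succ, Fin.forall_fin_succ]
  exact ⟨hx, hy, hz, fun i => i.elim0⟩

theorem exists_eq_linear_of_isHomogeneous_one {f : MvPolynomial (Fin 3) R}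
    (hf : f.IsHomogeneous 1) :
    ∃ a b c : R, f = a • X 0 + b • X 1 + c • (X 0 + X 2) := by
  rw [← mem_homogeneousSubmodule, homogeneousSubmodule_one_eq_span_X,
    Submodule.mem_span_range_iff_exists_fun] at hf
  obtain ⟨r, rfl⟩ := hf
  refine ⟨r 0 - r 2, r 1, r 2, ?_⟩
  rw [Fin.sum_univ_three]
  module

theorem coeffs_eq_zero_of_linear_eq_zero {a b c : R}
    (h : a • X 0 + b • X 1 + c • (X 0 + X 2) = (0 : MvPolynomial (Fin 3) R)) :
    a = 0 ∧ b = 0 ∧ c = 0 := by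
  refine ⟨?_, ?_, ?_⟩
  · simpa [smul_eval] using congrArg (eval ![1, 0, -1]) h
  · simpa [smul_eval] using congrArg (eval ![0, 1, 0]) h
  · simpa [smul_eval] using congrArg (eval ![0, 0, 1]) h

theorem exists_eq_smul_X_zero {f : MvPolynomial (Fin 3) R} (hf : f.IsHomogeneous 1)
    (h : ∀ v : Fin 3 → R, v 0 = 0 → v 1 * v 2 = 0 → eval v f = 0) : ∃ a : R, f = a • X 0 := by
  obtain ⟨a, b, c, rfl⟩ := exists_eq_linear_of_isHomogeneous_one hf
  have hb : b = 0 := by simpa [smul_eval] using h ![0, 1, 0] (by simp) (by simp)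
  have hc : c = 0 := by simpa [smul_eval] using h ![0, 0, 1] (by simp) (by simp)
  exact ⟨a, by simp [hb, hc]⟩

theorem matrix_eq_of_map_eq_smul {φ : MvPolynomial (Fin 3) R →ₐ[R] MvPolynomial (Fin 3) R}
    {M : Matrix (Fin 3) (Fin 3) R} {a b c : R}
    (hM : ∀ i, φ (X i) = ∑ j, C (M i j) * X j) (hx : φ (X 0) = a • X 0) (hy : φ (X 1) = b • X 1)
    (hw : φ (X 0 + X 2) = c • (X 0 + X 2)) : M = !![a, 0, 0; 0, b, 0; c - a, 0, c] := by
  have hz : φ (X 2) = (c - a) • X 0 + c • X 2 := by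
    rw [map_add, hx] at hw
    linear_combination (norm := module) hw
  have hcoeff (i j : Fin 3) : M i j = eval (Pi.single j 1) (φ (X i)) := by
    simp [hM, Pi.single_apply]
  ext i j
  rw [hcoeff]
  fin_cases i <;> fin_cases j <;> simp [hx, hy, hz, smul_eval]

end LinearForms

/-- The Poisson bracket of the theorem. With `w = X 0 + X 2` it reads `{x, y} = xy`,
`{y, w} = yw + 3x²`, `{w, x} = wx` and is the Jacobian bracket of the potential `xyw + x³`. -/
noncomputable abbrev quadraticBracket (k : Type*) [Field k] :
    MvPolynomial (Fin 3) k → MvPolynomial (Fin 3) k → MvPolynomial (Fin 3) k :=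
  jacBracket (X 0 * X 1) (3 * X 0 ^ 2 + 2 * X 0 * X 1 + X 1 * X 2) (X 0 ^ 2 + X 0 * X 2)

section Bracket

variable {k : Type*} [Field k]

theorem jacBracket_mem {p₁₂ p₂₃ p₃₁ : MvPolynomial (Fin 3) k} {I : Ideal (MvPolynomial (Fin 3) k)}
    (h₁₂ : p₁₂ ∈ I) (h₂₃ : p₂₃ ∈ I) (h₃₁ : p₃₁ ∈ I) (f g : MvPolynomial (Fin 3) k) :
    jacBracket p₁₂ p₂₃ p₃₁ f g ∈ I :=
  I.add_mem (I.add_mem (I.mul_mem_left _ h₁₂) (I.mul_mem_left _ h₂₃)) (I.mul_mem_left _ h₃₁)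

theorem jacBracket_smul_left (p₁₂ p₂₃ p₃₁ f g : MvPolynomial (Fin 3) k) (a : k) :
    jacBracket p₁₂ p₂₃ p₃₁ (a • f) g = a • jacBracket p₁₂ p₂₃ p₃₁ f g := by
  simp only [jacBracket, Derivation.map_smul]
  simp only [smul_eq_C_mul]
  ring

theorem jacBracket_smul_right (p₁₂ p₂₃ p₃₁ f g : MvPolynomial (Fin 3) k) (b : k) :
    jacBracket p₁₂ p₂₃ p₃₁ f (b • g) = b • jacBracket p₁₂ p₂₃ p₃₁ f g := by
  simp only [jacBracket, Derivation.map_smul]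
  simp only [smul_eq_C_mul]
  ring

theorem quadraticBracket_X_zero_X_one : quadraticBracket k (X 0) (X 1) = X 0 * X 1 := by
  simp [jacBracket, pderiv_X]

theorem quadraticBracket_X_one_X_two :
    quadraticBracket k (X 1) (X 2) = 3 * X 0 ^ 2 + 2 * X 0 * X 1 + X 1 * X 2 := by
  simp [jacBracket, pderiv_X]

theorem quadraticBracket_X_zero_w :
    quadraticBracket k (X 0) (X 0 + X 2) = -(X 0 * (X 0 + X 2)) := by
  simp only [jacBracket, pderiv_X, map_add, ne_eq, zero_ne_one, Fin.reduceEq,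
    not_false_eq_true, Pi.single_eq_of_ne, Pi.single_eq_same]
  ring

theorem quadraticBracket_X_one_w :
    quadraticBracket k (X 1) (X 0 + X 2) = 3 * X 0 ^ 2 + X 1 * (X 0 + X 2) := by
  simp only [jacBracket, pderiv_X, map_add, ne_eq, one_ne_zero, zero_ne_one, Fin.reduceEq,
    not_false_eq_true, Pi.single_eq_of_ne, Pi.single_eq_same]
  ring

theorem quadraticBracket_X_zero_linear (a b c : k) :
    quadraticBracket k (X 0) (a • X 0 + b • X 1 + c • (X 0 + X 2)) =
      X 0 * (b • X 1 - c • (X 0 + X 2)) := by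
  simp only [jacBracket, pderiv_X, map_add, Derivation.map_smul, ne_eq, one_ne_zero, zero_ne_one,
    Fin.reduceEq, not_false_eq_true, Pi.single_eq_of_ne, Pi.single_eq_same]
  simp only [smul_eq_C_mul]
  ring

theorem quadraticBracket_mem_ker_constantCoeff_sq (f g : MvPolynomial (Fin 3) k) :
    quadraticBracket k f g ∈ RingHom.ker (constantCoeff (R := k) (σ := Fin 3)) ^ 2 := by
  set m := RingHom.ker (constantCoeff (R := k) (σ := Fin 3))
  have hXX (i j : Fin 3) : X i * X j ∈ m ^ 2 := by
    rw [pow_two]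
    exact Ideal.mul_mem_mul (constantCoeff_X _ i) (constantCoeff_X _ j)
  have hXsq : (X 0 : MvPolynomial (Fin 3) k) ^ 2 ∈ m ^ 2 := by simpa only [pow_two] using hXX 0 0
  refine jacBracket_mem (hXX 0 1) ?_ ((m ^ 2).add_mem hXsq (hXX 0 2)) f g
  rw [mul_assoc]
  exact (m ^ 2).add_mem ((m ^ 2).add_mem ((m ^ 2).mul_mem_left _ hXsq)
    ((m ^ 2).mul_mem_left _ (hXX 0 1))) (hXX 1 2)

theorem eval_quadraticBracket_eq_zero {v : Fin 3 → k} (hv₀ : v 0 = 0) (hv₁₂ : v 1 * v 2 = 0)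
    (f g : MvPolynomial (Fin 3) k) : eval v (quadraticBracket k f g) = 0 := by
  rw [← RingHom.mem_ker]
  apply jacBracket_mem <;> simp [RingHom.mem_ker, hv₀, hv₁₂]

variable {f : MvPolynomial (Fin 3) k}

theorem exists_eq_smul_X_one [NeZero (2 : k)] (hf : f.IsHomogeneous 1)
    (h : quadraticBracket k (X 0) f = X 0 * f) : ∃ b : k, f = b • X 1 := by
  obtain ⟨a, b, c, rfl⟩ := exists_eq_linear_of_isHomogeneous_one hf
  rw [quadraticBracket_X_zero_linear, mul_right_inj' (X_ne_zero 0)] at h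
  obtain ⟨ha, -, hc⟩ := coeffs_eq_zero_of_linear_eq_zero (a := a) (b := 0) (c := 2 * c) <| by
    linear_combination (norm := module) -h
  have hc' : c = 0 := (mul_eq_zero.1 hc).resolve_left two_ne_zero
  exact ⟨b, by simp [ha, hc']⟩

theorem exists_eq_smul_w [NeZero (2 : k)] (hf : f.IsHomogeneous 1)
    (h : quadraticBracket k (X 0) f = -(X 0 * f)) : ∃ c : k, f = c • (X 0 + X 2) := by
  obtain ⟨a, b, c, rfl⟩ := exists_eq_linear_of_isHomogeneous_one hf
  rw [quadraticBracket_X_zero_linear, ← mul_neg, mul_right_inj' (X_ne_zero 0)] at h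
  obtain ⟨ha, hb, -⟩ := coeffs_eq_zero_of_linear_eq_zero (a := a) (b := 2 * b) (c := 0) <| by
    linear_combination (norm := module) h
  have hb' : b = 0 := (mul_eq_zero.1 hb).resolve_left two_ne_zero
  exact ⟨c, by simp [ha, hb']⟩

end Bracket

section Reflections

variable {k : Type*} [Field k] {φ : MvPolynomial (Fin 3) k ≃ₐ[k] MvPolynomial (Fin 3) k}

theorem apply_zero_eq_zero_of_forall_eval_quadraticBracket_eq_zero [NeZero (3 : k)] {u : Fin 3 → k}
    (hu : ∀ f g, eval u (quadraticBracket k f g) = 0) : u 0 = 0 := by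
  have h₀₁ : u 0 * u 1 = 0 := by simpa [quadraticBracket_X_zero_X_one] using hu (X 0) (X 1)
  have h₁₂ : 3 * u 0 ^ 2 + 2 * u 0 * u 1 + u 1 * u 2 = 0 := by
    simpa [quadraticBracket_X_one_X_two] using hu (X 1) (X 2)
  rcases mul_eq_zero.1 h₀₁ with h | h
  · exact h
  · simpa [h, NeZero.ne] using h₁₂

theorem IsGradedPoissonAut.exists_map_X_zero [NeZero (3 : k)]
    (hφ : IsGradedPoissonAut (quadraticBracket k) φ) : ∃ a : k, a ≠ 0 ∧ φ (X 0) = a • X 0 := by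
  obtain ⟨a, ha⟩ : ∃ a : k, φ (X 0) = a • X 0 := by
    refine exists_eq_smul_X_zero (hφ.1 0) fun v hv₀ hv₁₂ => ?_
    let u : Fin 3 → k := fun i => eval v (φ (X i))
    have hu (f : MvPolynomial (Fin 3) k) : eval u f = eval v (φ f) := by
      simpa [aeval_eq_eval, u, Function.comp_def] using
        (DFunLike.congr_fun (aeval_unique ((aeval v).comp φ.toAlgHom)) f).symm
    refine apply_zero_eq_zero_of_forall_eval_quadraticBracket_eq_zero (u := u) fun f g => ?_
    rw [hu, hφ.2, eval_quadraticBracket_eq_zero hv₀ hv₁₂]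
  refine ⟨a, ?_, ha⟩
  rintro rfl
  exact X_ne_zero (R := k) 0 (φ.injective (by rw [ha, zero_smul, map_zero]))

theorem IsGradedPoissonAut.exists_map_eq_smul [NeZero (2 : k)] [NeZero (3 : k)]
    (hφ : IsGradedPoissonAut (quadraticBracket k) φ) :
    ∃ a b c : k, a ≠ 0 ∧ b * c = a ^ 2 ∧ φ (X 0) = a • X 0 ∧ φ (X 1) = b • X 1 ∧
      φ (X 0 + X 2) = c • (X 0 + X 2) := by
  obtain ⟨a, ha, hx⟩ := hφ.exists_map_X_zero
  have hbracket (f : MvPolynomial (Fin 3) k) :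
      a • quadraticBracket k (X 0) (φ f) = φ (quadraticBracket k (X 0) f) := by
    rw [hφ.2, hx]
    exact (jacBracket_smul_left _ _ _ _ _ a).symm
  obtain ⟨b, hy⟩ : ∃ b : k, φ (X 1) = b • X 1 := by
    refine exists_eq_smul_X_one (hφ.1 1) (smul_right_injective _ ha ?_)
    dsimp only
    rw [hbracket, quadraticBracket_X_zero_X_one, map_mul, hx, smul_mul_assoc]
  obtain ⟨c, hw⟩ : ∃ c : k, φ (X 0 + X 2) = c • (X 0 + X 2) := by
    refine exists_eq_smul_w ?_ (smul_right_injective _ ha ?_)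
    · rw [map_add]
      exact (hφ.1 0).add (hφ.1 2)
    · dsimp only
      rw [hbracket, quadraticBracket_X_zero_w, map_neg, map_mul, hx, smul_mul_assoc, smul_neg]
  refine ⟨a, b, c, ha, ?_, hx, hy, hw⟩
  have hsmul : quadraticBracket k (b • X 1) (c • (X 0 + X 2)) =
      b • c • quadraticBracket k (X 1) (X 0 + X 2) :=
    (jacBracket_smul_left _ _ _ _ _ b).trans (congrArg _ (jacBracket_smul_right _ _ _ _ _ c))
  have hyw := hφ.2 (X 1) (X 0 + X 2)
  rw [hy, hw, hsmul, quadraticBracket_X_one_w, map_add, map_mul, map_mul, map_pow, hx, hy, hw,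
    map_ofNat] at hyw
  have h3 : 3 * a ^ 2 = b * (c * 3) := by simpa [smul_eval] using congrArg (eval ![1, 0, 0]) hyw
  exact mul_left_cancel₀ (NeZero.ne (3 : k)) (by linear_combination -h3)

theorem IsPoissonReflection.map_eq [NeZero (2 : k)] [NeZero (3 : k)]
    (hφ : IsPoissonReflection (quadraticBracket k) φ) :
    φ (X 0) = -X 0 ∧ φ (X 1) = X 1 ∧ φ (X 0 + X 2) = X 0 + X 2 := by
  obtain ⟨hφ, -, M, hM, ξ, hξ, -, hcharpoly⟩ := hφ
  obtain ⟨a, b, c, ha, hbc, hx, hy, hw⟩ := hφ.exists_map_eq_smul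
  have heigen (t : k) : (t - a) * (t - b) * (t - c) = (t - 1) ^ 2 * (t - ξ) := by
    have := congrArg (Polynomial.eval t) hcharpoly
    rw [matrix_eq_of_map_eq_smul (φ := φ.toAlgHom) hM hx hy hw, Matrix.eval_charpoly,
      Matrix.det_fin_three] at this
    simpa using this
  obtain ⟨rfl, rfl, rfl⟩ := eigenvalues_eq_of_charpoly_eq ha hbc hξ heigen
  exact ⟨by simpa using hx, by simpa using hy, by simpa using hw⟩

end Reflections

section Invariants

variable {k : Type*} [Field k]

theorem forall_mem_apply_eq_self_iff_mem_adjoin [NeZero (2 : k)] [NeZero (3 : k)]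
    {S : Set (MvPolynomial (Fin 3) k ≃ₐ[k] MvPolynomial (Fin 3) k)} (hne : S.Nonempty)
    (hS : ∀ φ ∈ S, IsPoissonReflection (quadraticBracket k) φ) {f : MvPolynomial (Fin 3) k} :
    (∀ φ ∈ S, φ f = f) ↔ f ∈ Algebra.adjoin k {X 0 ^ 2, X 1, X 0 + X 2} := by
  constructor
  · obtain ⟨φ, hφ⟩ := hne
    obtain ⟨hx, hy, hw⟩ := (hS φ hφ).map_eq
    intro hf
    refine mem_adjoin_insert_sq_of_apply_eq_self (IsUnit.mk0 _ two_ne_zero) φ.toAlgHom hx ?_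
      (adjoin_X_zero_X_one_w_eq_top (R := k) ▸ Algebra.mem_top) (hf φ hφ)
    rintro t (rfl | rfl)
    exacts [hy, hw]
  · intro hf φ hφ
    obtain ⟨hx, hy, hw⟩ := (hS φ hφ).map_eq
    refine (AlgHom.eqOn_adjoin_iff (φ := φ.toAlgHom) (ψ := AlgHom.id k _)).2 ?_ hf
    rintro t (rfl | rfl | rfl)
    · simp [hx]
    exacts [hy, hw]

theorem adjoin_ne_top_of_quadraticBracket_eq [NeZero (3 : k)] {p q r : MvPolynomial (Fin 3) k}
    (hqr : quadraticBracket k q r = 3 * p + q * r) : Algebra.adjoin k {p, q, r} ≠ ⊤ := by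
  classical
  intro hgen
  refine adjoin_union_ker_constantCoeff_sq_ne_top ({q, r} : Finset (MvPolynomial (Fin 3) k))
    (Finset.card_le_two.trans_lt (by simp)) (top_le_iff.1 (hgen ▸ Algebra.adjoin_le ?_))
  set B := Algebra.adjoin k (((({q, r} : Finset (MvPolynomial (Fin 3) k)) : Set _) ∪
    ↑(RingHom.ker (constantCoeff (R := k) (σ := Fin 3)) ^ 2) : Set (MvPolynomial (Fin 3) k)))
  have hqB : q ∈ B := Algebra.subset_adjoin (Or.inl (by simp))
  have hrB : r ∈ B := Algebra.subset_adjoin (Or.inl (by simp))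
  have hbrB : quadraticBracket k q r ∈ B :=
    Algebra.subset_adjoin (Or.inr (quadraticBracket_mem_ker_constantCoeff_sq q r))
  have hpB : p ∈ B := by
    have : p = (3⁻¹ : k) • (quadraticBracket k q r - q * r) := by
      rw [eq_inv_smul_iff₀ (NeZero.ne 3), hqr, smul_eq_C_mul, map_ofNat]
      ring
    exact this ▸ B.smul_mem (B.sub_mem hbrB (B.mul_mem hqB hrB)) _
  rintro s (rfl | rfl | rfl)
  exacts [hpB, hqB, hrB]

theorem range_ne_adjoin_sq_X_zero_X_one_w [NeZero (3 : k)]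
    {e : MvPolynomial (Fin 3) k →ₐ[k] MvPolynomial (Fin 3) k} (he : Function.Injective e)
    (hbr : ∀ f g, e (quadraticBracket k f g) = quadraticBracket k (e f) (e g)) :
    e.range ≠ Algebra.adjoin k {X 0 ^ 2, X 1, X 0 + X 2} := by
  intro hrange
  have hpre : ∀ g ∈ ({X 0 ^ 2, X 1, X 0 + X 2} : Set (MvPolynomial (Fin 3) k)), ∃ f, e f = g :=
    fun g hg => AlgHom.mem_range e |>.1 (hrange ▸ Algebra.subset_adjoin hg)
  obtain ⟨p, hp⟩ := hpre (X 0 ^ 2) (by simp)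
  obtain ⟨q, hq⟩ := hpre (X 1) (by simp)
  obtain ⟨r, hr⟩ := hpre (X 0 + X 2) (by simp)
  have hgen : Algebra.adjoin k {p, q, r} = ⊤ := adjoin_eq_top_of_range_eq_adjoin_image he <| by
    rw [hrange, Set.image_insert_eq, Set.image_pair, hp, hq, hr]
  have hqr : quadraticBracket k q r = 3 * p + q * r := he <| by
    rw [hbr, hq, hr, quadraticBracket_X_one_w, map_add, map_mul, map_mul, map_ofNat, hp, hq, hr]
  exact adjoin_ne_top_of_quadraticBracket_eq hqr hgen

end Invariants

theorem stmt_14_general {k : Type*} [Field k] [NeZero (2 : k)] [NeZero (3 : k)]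
    (G : Subgroup (MvPolynomial (Fin 3) k ≃ₐ[k] MvPolynomial (Fin 3) k)) (hnt : G ≠ ⊥)
    (hgen : ∃ S : Set (MvPolynomial (Fin 3) k ≃ₐ[k] MvPolynomial (Fin 3) k),
      (∀ φ ∈ S, IsPoissonReflection (quadraticBracket k) φ) ∧ Subgroup.closure S = G) :
    ¬ InvariantsPoissonIso (quadraticBracket k) G := by
  rintro ⟨e, he, hrange, hbr⟩
  obtain ⟨S, hS, rfl⟩ := hgen
  have hne : S.Nonempty := by
    rw [Set.nonempty_iff_ne_empty]
    rintro rfl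
    exact hnt Subgroup.closure_empty
  refine range_ne_adjoin_sq_X_zero_X_one_w he hbr (SetLike.ext fun f => ?_)
  calc f ∈ e.range ↔ ∀ φ ∈ Subgroup.closure S, φ f = f := Set.ext_iff.1 hrange f
    _ ↔ ∀ φ ∈ S, φ f = f := forall_mem_closure_apply_eq_self_iff
    _ ↔ f ∈ Algebra.adjoin k {X 0 ^ 2, X 1, X 0 + X 2} :=
      forall_mem_apply_eq_self_iff_mem_adjoin hne hS

/-- With this bracket, if `G` is a nontrivial finite subgroup of graded Poisson
automorphisms generated by Poisson reflections, then `P^G` is not isomorphic to `P`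
as a Poisson algebra. -/
theorem stmt_14 {k : Type*} [Field k] [IsAlgClosed k] [CharZero k]
    (G : Subgroup (MvPolynomial (Fin 3) k ≃ₐ[k] MvPolynomial (Fin 3) k))
    (hG : ∀ φ ∈ G, IsGradedPoissonAut (jacBracket (X 0 * X 1) (3 * X 0 ^ 2 + 2 * X 0 * X 1 + X 1 * X 2) (X 0 ^ 2 + X 0 * X 2)) φ)
    (hfin : Finite G) (hnt : G ≠ ⊥)
    (hgen : ∃ S : Set (MvPolynomial (Fin 3) k ≃ₐ[k] MvPolynomial (Fin 3) k),
      (∀ φ ∈ S, IsPoissonReflection (jacBracket (X 0 * X 1) (3 * X 0 ^ 2 + 2 * X 0 * X 1 + X 1 * X 2) (X 0 ^ 2 + X 0 * X 2)) φ) ∧ Subgroup.closure S = G) :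
    ¬ InvariantsPoissonIso (jacBracket (X 0 * X 1) (3 * X 0 ^ 2 + 2 * X 0 * X 1 + X 1 * X 2) (X 0 ^ 2 + X 0 * X 2)) G := by
  exact stmt_14_general G hnt hgen
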